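/- arXiv:1006.3690 — 2 statements merged into one kernel-verified Lean document; each statement's English description precedes it below -/
import Mathlib

section
/- Suppose p is differentiable at σ > 0 with p'(σ) = ∫∫ min{f(y)/f(x), 1} (∂g(y|x,σ)/∂σ) f(x) dy dx (differentiation under the integral sign), and the integral defining φ(σ) is finite. Then p'(σ) = -m·p(σ)/σ + φ(σ). (Equation (3)) -/
open MeasureTheory Real Matrix

/-- The density of the multivariate normal distribution with mean `x` and covariance `σ² A`. -/
noncomputable def gaussDensity (m : ℕ) (A : Matrix (Fin m) (Fin m) ℝ)
    (x y : Fin m → ℝ) (σ : ℝ) : ℝ :=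
  (2 * π * σ ^ 2) ^ (-(m : ℝ) / 2) * A.det ^ (-(1 : ℝ) / 2) *
    Real.exp (-((y - x) ⬝ᵥ (A⁻¹).mulVec (y - x)) / (2 * σ ^ 2))

/-- `min{f(y)/f(x), 1}`, with the convention that this equals `1` when `f(x) = 0`. -/
noncomputable def accept {α : Type*} (f : α → ℝ) (x y : α) : ℝ :=
  if f x = 0 then 1 else min (f y / f x) 1

/-!
Logarithmic differentiation of the Gaussian density in the scale gives
`∂g/∂σ = (-m/σ + q σ⁻³) g`, where `q = (y - x)ᵀ A⁻¹ (y - x)`. Integrating against a bounded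
acceptance rule and `f` splits `p'` into `-m p / σ` and `φ`. Splitting is legitimate once each piece
is integrable: finiteness of `φ` is the second one, and the first is dominated by a convolution
integrand of `f` and a centred Gaussian.
-/

section GaussianIntegrability

variable {ι : Type*} [Fintype ι]

lemma integrable_comp_mulVec [DecidableEq ι] {F : Type*} [NormedAddCommGroup F]
    {g : (ι → ℝ) → F} (hg : Integrable g) {M : Matrix ι ι ℝ} (hM : M.det ≠ 0) :
    Integrable fun z => g (M *ᵥ z) := by
  have hmap : Integrable g (Measure.map (toLin' M) volume) := by
    rw [Real.map_matrix_volume_pi_eq_smul_volume_pi hM]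
    exact hg.smul_measure ENNReal.ofReal_ne_top
  exact hmap.comp_measurable (toLin' M).continuous_of_finiteDimensional.measurable

lemma integrable_exp_neg_dotProduct_self :
    Integrable fun z : ι → ℝ => exp (-(z ⬝ᵥ z)) := by
  have hprod : Integrable fun z : ι → ℝ => ∏ i, exp (-1 * z i ^ 2) :=
    Integrable.fintype_prod fun _ => integrable_exp_neg_mul_sq one_pos
  refine hprod.congr (ae_of_all _ fun z => ?_)
  simp only [← Real.exp_sum, dotProduct, ← Finset.sum_neg_distrib, neg_one_mul, sq]

open scoped MatrixOrder in
lemma integrable_exp_neg_dotProduct_mulVec {B : Matrix ι ι ℝ} (hB : B.PosDef) :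
    Integrable fun z : ι → ℝ => exp (-(z ⬝ᵥ B *ᵥ z)) := by
  classical
  obtain ⟨C, rfl⟩ := CStarAlgebra.nonneg_iff_eq_star_mul_self.mp hB.posSemidef.nonneg
  have hC : C.det ≠ 0 := fun h => hB.det_pos.ne' (by rw [det_mul, h, mul_zero])
  refine (integrable_comp_mulVec integrable_exp_neg_dotProduct_self hC).congr
    (ae_of_all _ fun z => ?_)
  simp only [← mulVec_mulVec, dotProduct_mulVec z, star_eq_conjTranspose, vecMul_conjTranspose,
    star_trivial]

end GaussianIntegrability

section GaussDensity

variable {m : ℕ} {A : Matrix (Fin m) (Fin m) ℝ} {σ : ℝ}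

lemma gaussDensity_eq_gaussDensity_zero_sub (A : Matrix (Fin m) (Fin m) ℝ) (x y : Fin m → ℝ)
    (σ : ℝ) : gaussDensity m A x y σ = gaussDensity m A 0 (y - x) σ := by
  simp only [gaussDensity, sub_zero]

lemma integrable_gaussDensity_zero (hA : A.PosDef) (hσ : σ ≠ 0) :
    Integrable fun z => gaussDensity m A 0 z σ := by
  have hB : ((2 * σ ^ 2)⁻¹ • A⁻¹).PosDef := hA.inv.smul (by positivity)
  refine ((integrable_exp_neg_dotProduct_mulVec hB).const_mul
    ((2 * π * σ ^ 2) ^ (-(m : ℝ) / 2) * A.det ^ (-(1 : ℝ) / 2))).congr (ae_of_all _ fun z => ?_)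
  simp only [gaussDensity, sub_zero, smul_mulVec, dotProduct_smul, smul_eq_mul, neg_div,
    inv_mul_eq_div]

lemma integrable_gaussDensity_mul (hA : A.PosDef) (hσ : σ ≠ 0) {f : (Fin m → ℝ) → ℝ}
    (hf : Integrable f) :
    Integrable fun q : (Fin m → ℝ) × (Fin m → ℝ) => gaussDensity m A q.1 q.2 σ * f q.1 := by
  refine (hf.convolution_integrand (ContinuousLinearMap.mul ℝ ℝ)
    (integrable_gaussDensity_zero hA hσ)).swap.congr (ae_of_all _ fun q => ?_)
  simp only [Function.comp_apply, Prod.fst_swap, Prod.snd_swap, ContinuousLinearMap.mul_apply',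
    gaussDensity_eq_gaussDensity_zero_sub A q.1 q.2 σ, mul_comm]

lemma hasDerivAt_const_mul_sq_rpow {c : ℝ} (hc : 0 < c) (r : ℝ) (hσ : σ ≠ 0) :
    HasDerivAt (fun s : ℝ => (c * s ^ 2) ^ r) (2 * r / σ * (c * σ ^ 2) ^ r) σ := by
  have hbase : 0 < c * σ ^ 2 := by positivity
  have hsq : HasDerivAt (fun s : ℝ => c * s ^ 2) (c * (2 * σ)) σ := by
    simpa using (hasDerivAt_pow 2 σ).const_mul c
  convert hsq.rpow_const (p := r) (Or.inl hbase.ne') using 1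
  rw [Real.rpow_sub_one hbase.ne']
  field_simp

lemma hasDerivAt_exp_neg_div_two_mul_sq (q : ℝ) (hσ : σ ≠ 0) :
    HasDerivAt (fun s : ℝ => exp (-q / (2 * s ^ 2)))
      (q * σ ^ (-3 : ℤ) * exp (-q / (2 * σ ^ 2))) σ := by
  have hsq : HasDerivAt (fun s : ℝ => 2 * s ^ 2) (2 * (2 * σ)) σ := by
    simpa using (hasDerivAt_pow 2 σ).const_mul 2
  convert ((hasDerivAt_const σ (-q)).fun_div hsq (by positivity)).exp using 1
  field_simp
  ring

lemma hasDerivAt_gaussDensity (A : Matrix (Fin m) (Fin m) ℝ) (x y : Fin m → ℝ) (hσ : σ ≠ 0) :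
    HasDerivAt (gaussDensity m A x y)
      ((-(m : ℝ) / σ + σ ^ (-3 : ℤ) * ((y - x) ⬝ᵥ A⁻¹ *ᵥ (y - x))) * gaussDensity m A x y σ)
      σ := by
  have hnormalization := (hasDerivAt_const_mul_sq_rpow two_pi_pos (-(m : ℝ) / 2) hσ).mul_const
    (A.det ^ (-(1 : ℝ) / 2))
  have hexp := hasDerivAt_exp_neg_div_two_mul_sq ((y - x) ⬝ᵥ A⁻¹ *ᵥ (y - x)) hσ
  refine (hnormalization.fun_mul hexp).congr_deriv ?_
  unfold gaussDensity
  ring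

lemma integral_mul_deriv_gaussDensity_mul (hσ : σ ≠ 0) {a : (Fin m → ℝ) → (Fin m → ℝ) → ℝ}
    {f : (Fin m → ℝ) → ℝ}
    (hg : Integrable fun q : (Fin m → ℝ) × (Fin m → ℝ) =>
      a q.1 q.2 * gaussDensity m A q.1 q.2 σ * f q.1)
    (hquad : Integrable fun q : (Fin m → ℝ) × (Fin m → ℝ) =>
      a q.1 q.2 * ((q.2 - q.1) ⬝ᵥ A⁻¹ *ᵥ (q.2 - q.1)) * gaussDensity m A q.1 q.2 σ * f q.1) :
    ∫ x, ∫ y, a x y * deriv (fun s => gaussDensity m A x y s) σ * f x =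
      -(m : ℝ) / σ * (∫ x, ∫ y, a x y * gaussDensity m A x y σ * f x) +
        σ ^ (-3 : ℤ) * ∫ x, ∫ y, a x y * ((y - x) ⬝ᵥ A⁻¹ *ᵥ (y - x)) *
          gaussDensity m A x y σ * f x := by
  have hpointwise (x y : Fin m → ℝ) :
      a x y * deriv (fun s => gaussDensity m A x y s) σ * f x =
        -(m : ℝ) / σ * (a x y * gaussDensity m A x y σ * f x) +
          σ ^ (-3 : ℤ) * (a x y * ((y - x) ⬝ᵥ A⁻¹ *ᵥ (y - x)) *
            gaussDensity m A x y σ * f x) := by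
    rw [(hasDerivAt_gaussDensity A x y hσ).deriv]
    ring
  simp only [hpointwise]
  rw [integral_integral_add (hg.const_mul _) (hquad.const_mul _)]
  simp only [integral_const_mul]

end GaussDensity

section Accept

variable {α : Type*} {f : α → ℝ}

lemma norm_accept_le_one (hf : ∀ x, 0 ≤ f x) (x y : α) : ‖accept f x y‖ ≤ 1 := by
  unfold accept
  split_ifs
  · exact norm_one.le
  · rw [Real.norm_of_nonneg (le_min (div_nonneg (hf y) (hf x)) zero_le_one)]
    exact min_le_right _ _

lemma measurable_accept [MeasurableSpace α] (hf : Measurable f) :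
    Measurable fun q : α × α => accept f q.1 q.2 := by
  have hzero : MeasurableSet {q : α × α | f q.1 = 0} :=
    measurableSet_eq_fun (hf.comp measurable_fst) measurable_const
  unfold accept
  exact Measurable.ite hzero measurable_const (by fun_prop)

end Accept

/-- The Barker rule `f y / (f x + f y)` is another admissible choice of `a`. -/
theorem eqn3_general {m : ℕ} {A : Matrix (Fin m) (Fin m) ℝ} (hA : A.PosDef)
    {f : (Fin m → ℝ) → ℝ} (hf : Integrable f)
    {a : (Fin m → ℝ) → (Fin m → ℝ) → ℝ}
    (ha : AEStronglyMeasurable fun q : (Fin m → ℝ) × (Fin m → ℝ) => a q.1 q.2)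
    {C : ℝ} (haC : ∀ᵐ q : (Fin m → ℝ) × (Fin m → ℝ), ‖a q.1 q.2‖ ≤ C)
    {p : ℝ → ℝ} (hp : ∀ σ, p σ = ∫ x, ∫ y, a x y * gaussDensity m A x y σ * f x)
    {φ : ℝ → ℝ}
    (hφ : ∀ σ, φ σ = σ ^ (-3 : ℤ) *
      ∫ x, ∫ y, a x y * ((y - x) ⬝ᵥ A⁻¹ *ᵥ (y - x)) * gaussDensity m A x y σ * f x)
    {σ : ℝ} (hσ : σ ≠ 0)
    (hfin : Integrable fun q : (Fin m → ℝ) × (Fin m → ℝ) =>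
      a q.1 q.2 * ((q.2 - q.1) ⬝ᵥ A⁻¹ *ᵥ (q.2 - q.1)) * gaussDensity m A q.1 q.2 σ * f q.1)
    (hderiv : HasDerivAt p
      (∫ x, ∫ y, a x y * deriv (fun s => gaussDensity m A x y s) σ * f x) σ) :
    HasDerivAt p (-(m : ℝ) * p σ / σ + φ σ) σ := by
  have hint : Integrable fun q : (Fin m → ℝ) × (Fin m → ℝ) =>
      a q.1 q.2 * gaussDensity m A q.1 q.2 σ * f q.1 := by
    simpa only [mul_assoc] using (integrable_gaussDensity_mul hA hσ hf).bdd_mul ha haC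
  refine hderiv.congr_deriv ?_
  rw [integral_mul_deriv_gaussDensity_mul hσ hint hfin, hp, hφ, mul_div_right_comm]

/-- Equation (3): if differentiation under the integral sign is valid at `σ` and the integral
defining `φ(σ)` is finite, then `p'(σ) = -m p(σ)/σ + φ(σ)`. -/
theorem eqn3 (m : ℕ) (A : Matrix (Fin m) (Fin m) ℝ) (hA : A.PosDef)
    (f : (Fin m → ℝ) → ℝ) (hfm : Measurable f) (hf0 : ∀ x, 0 ≤ f x)
    (hf1 : ∫ x, f x = 1)
    (p : ℝ → ℝ)
    (hp : ∀ σ : ℝ, p σ = ∫ x, ∫ y, accept f x y * gaussDensity m A x y σ * f x)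
    (φ : ℝ → ℝ)
    (hφ : ∀ σ : ℝ, φ σ = σ ^ (-3 : ℤ) *
        ∫ x, ∫ y, accept f x y * ((y - x) ⬝ᵥ (A⁻¹).mulVec (y - x)) *
          gaussDensity m A x y σ * f x)
    (σ : ℝ) (hσ : 0 < σ)
    -- the integral defining `φ(σ)` is finite
    (hfin : Integrable (fun q : (Fin m → ℝ) × (Fin m → ℝ) =>
        accept f q.1 q.2 * ((q.2 - q.1) ⬝ᵥ (A⁻¹).mulVec (q.2 - q.1)) *
          gaussDensity m A q.1 q.2 σ * f q.1))
    -- differentiation under the integral sign at `σ`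
    (hderiv : HasDerivAt p
        (∫ x, ∫ y, accept f x y * deriv (fun s => gaussDensity m A x y s) σ * f x) σ) :
    deriv p σ = -(m : ℝ) * p σ / σ + φ σ :=
  (eqn3_general hA (integrable_of_integral_eq_one hf1) (measurable_accept hfm).aestronglyMeasurable
    (ae_of_all _ fun q => norm_accept_le_one hf0 q.1 q.2) hp hφ hσ.ne' hfin hderiv).deriv
end

section
/- Let x ∈ ℝ^m and λ ∈ ℝ^m be fixed vectors, let R = {y ∈ ℝ^m : λᵀ(y - x) ≤ 0}, and let σ > 0. Then ∫_R λᵀ(y - x) · σ^{-3}(y - x)ᵀA⁻¹(y - x) · g(y|x,σ) dy = (m + 1)·σ^{-1} ∫_R λᵀ(y - x) · g(y|x,σ) dy. -/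
/-!
Let `f` and `q` be positively homogeneous of degrees `d` and `e` on an `n`-dimensional space, with
`q` positive away from `0`, and put `I t = ∫ f exp (-t q)`. The substitution `x ↦ t ^ (1 / e) • x`
gives `I t = t ^ (-(n + d) / e) * I 1`, whereas differentiation under the integral gives
`I' t = -∫ f q exp (-t q)`. At `t = 1` this reads `e ∫ f q exp (-q) = (n + d) ∫ f exp (-q)`.
The half-space enters through `f z = min (λ ⬝ᵥ z) 0`, which has degree `1`, and the covariance
through `q z = zᵀ A⁻¹ z / (2 σ ^ 2)`, which has degree `2`.
-/

open MeasureTheory Real Matrix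

open Module

section PosHomogeneous

variable {E : Type*} {d e : ℝ} {f q : E → ℝ}

/-- Positive homogeneity of real degree `d`, required only for scalars `s > 0`, so that
`z ↦ min (l z) 0` with `l` linear is homogeneous of degree `1`. -/
def IsPosHomogeneous [SMul ℝ E] (d : ℝ) (f : E → ℝ) : Prop :=
  ∀ ⦃s : ℝ⦄, 0 < s → ∀ x, f (s • x) = s ^ d * f x

namespace IsPosHomogeneous

lemma mul_comp_mul_eq [SMul ℝ E] (hf : IsPosHomogeneous d f) (hq : IsPosHomogeneous e q)
    (he : e ≠ 0) (φ : ℝ → ℝ) {t : ℝ} (ht : 0 < t) (x : E) :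
    f x * φ (t * q x) = t ^ (-(d / e)) * (f (t ^ e⁻¹ • x) * φ (q (t ^ e⁻¹ • x))) := by
  have hs : 0 < t ^ e⁻¹ := rpow_pos_of_pos ht _
  rw [hf hs, hq hs, ← rpow_mul ht.le, ← rpow_mul ht.le, inv_mul_cancel₀ he, rpow_one, mul_assoc,
    ← mul_assoc, ← rpow_add ht, inv_mul_eq_div, neg_add_cancel, rpow_zero, one_mul]

lemma map_zero [AddCommGroup E] [Module ℝ E] (hf : IsPosHomogeneous d f) (hd : d ≠ 0) :
    f 0 = 0 := by
  have hscale : 2 ^ d * f 0 = f 0 := by simpa using (hf two_pos 0).symm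
  by_contra h0
  have htwo : (2 : ℝ) ^ d = 2 ^ (0 : ℝ) := ((mul_eq_right₀ h0).mp hscale).trans (rpow_zero 2).symm
  exact hd ((rpow_right_inj two_pos (by norm_num)).mp htwo)

variable [NormedAddCommGroup E] [NormedSpace ℝ E]

lemma eq_norm_rpow_mul (hf : IsPosHomogeneous d f) (hd : d ≠ 0) (x : E) :
    f x = ‖x‖ ^ d * f (‖x‖⁻¹ • x) := by
  rcases eq_or_ne x 0 with rfl | hx
  · simp [hf.map_zero hd, hd]
  · rw [← hf (norm_pos_iff.mpr hx), smul_inv_smul₀ (norm_ne_zero_iff.mpr hx)]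

lemma exists_abs_le_mul_norm_rpow [FiniteDimensional ℝ E] (hf : IsPosHomogeneous d f)
    (hd : d ≠ 0) (hfc : Continuous f) : ∃ C, ∀ x, |f x| ≤ C * ‖x‖ ^ d := by
  obtain ⟨C, hC⟩ := (isCompact_sphere (0 : E) 1).exists_bound_of_continuousOn hfc.continuousOn
  refine ⟨C, fun x ↦ ?_⟩
  rcases eq_or_ne x 0 with rfl | hx
  · simp [hf.map_zero hd, hd]
  · rw [hf.eq_norm_rpow_mul hd x, abs_mul, Real.abs_rpow_of_nonneg (norm_nonneg x), abs_norm,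
      mul_comm]
    gcongr
    exact hC _ (by simp [norm_smul, hx])

lemma exists_pos_mul_norm_rpow_le [FiniteDimensional ℝ E] (hq : IsPosHomogeneous e q)
    (he : e ≠ 0) (hqc : Continuous q) (hpos : ∀ x ≠ 0, 0 < q x) :
    ∃ k > 0, ∀ x, k * ‖x‖ ^ e ≤ q x := by
  obtain ⟨k, hk, hkq⟩ := (isCompact_sphere (0 : E) 1).exists_forall_le' hqc.continuousOn
    fun x hx ↦ hpos x (ne_zero_of_mem_unit_sphere ⟨x, hx⟩)
  refine ⟨k, hk, fun x ↦ ?_⟩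
  rcases eq_or_ne x 0 with rfl | hx
  · simp [hq.map_zero he, he]
  · rw [hq.eq_norm_rpow_mul he x, mul_comm]
    gcongr
    exact hkq _ (by simp [norm_smul, hx])

end IsPosHomogeneous

end PosHomogeneous

section Integral

lemma mul_exp_neg_mul_le {u a b t : ℝ} (hu : 0 ≤ u) (ha : 0 < a) (hab : a + b ≤ t) :
    u * exp (-(t * u)) ≤ a⁻¹ * exp (-(b * u)) := by
  have hexp : a * u ≤ exp (a * u) := by linarith [add_one_le_exp (a * u)]
  calc u * exp (-(t * u)) = a⁻¹ * (a * u * exp (-(t * u))) := by field_simp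
    _ ≤ a⁻¹ * (exp (a * u) * exp (-((a + b) * u))) := by gcongr
    _ = a⁻¹ * exp (-(b * u)) := by rw [← exp_add]; ring_nf

lemma hasDerivAt_integral_mul_exp_neg_mul {α : Type*} [MeasurableSpace α] {μ : Measure α}
    {f q : α → ℝ} (hqm : AEStronglyMeasurable q μ) (hq0 : ∀ x, 0 ≤ q x)
    (hint : ∀ t > 0, Integrable (fun x ↦ f x * exp (-(t * q x))) μ) {c : ℝ} (hc : 0 < c) :
    HasDerivAt (fun t ↦ ∫ x, f x * exp (-(t * q x)) ∂μ)
      (∫ x, -(f x * exp (-(c * q x)) * q x) ∂μ) c := by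
  have hderiv (x : α) (t : ℝ) :
      HasDerivAt (fun t ↦ f x * exp (-(t * q x))) (-(f x * exp (-(t * q x)) * q x)) t := by
    simpa only [mul_neg, mul_assoc] using (hasDerivAt_mul_const (q x)).fun_neg.exp.const_mul (f x)
  have hbound (x : α) (t : ℝ) (ht : t ∈ Set.Ioi (c / 2)) :
      ‖-(f x * exp (-(t * q x)) * q x)‖ ≤ (c / 4)⁻¹ * ‖f x * exp (-(c / 4 * q x))‖ := by
    have hdecay : q x * exp (-(t * q x)) ≤ (c / 4)⁻¹ * exp (-(c / 4 * q x)) :=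
      mul_exp_neg_mul_le (hq0 x) (by positivity) (by linarith [Set.mem_Ioi.mp ht])
    calc ‖-(f x * exp (-(t * q x)) * q x)‖ = |f x| * (q x * exp (-(t * q x))) := by
          simp only [norm_neg, norm_mul, norm_eq_abs, abs_exp, abs_of_nonneg (hq0 x)]; ring
      _ ≤ |f x| * ((c / 4)⁻¹ * exp (-(c / 4 * q x))) := by gcongr
      _ = (c / 4)⁻¹ * ‖f x * exp (-(c / 4 * q x))‖ := by
          simp only [norm_mul, norm_eq_abs, abs_exp]; ring
  refine (hasDerivAt_integral_of_dominated_loc_of_deriv_le (Ioi_mem_nhds (half_lt_self hc))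
    ?_ (hint c hc) ((hint c hc).aestronglyMeasurable.mul hqm).neg (.of_forall hbound)
    ((hint (c / 4) (by positivity)).norm.const_mul _) (.of_forall fun x t _ ↦ hderiv x t)).2
  filter_upwards [lt_mem_nhds hc] with t ht using (hint t ht).aestronglyMeasurable

variable {E : Type*} [NormedAddCommGroup E] [NormedSpace ℝ E] [FiniteDimensional ℝ E]
  [MeasurableSpace E] [BorelSpace E] (μ : Measure E) [μ.IsAddHaarMeasure]

lemma integrable_norm_rpow_mul_exp_neg_mul_norm_rpow {d e k : ℝ} (hd : -finrank ℝ E < d)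
    (he : 0 < e) (hk : 0 < k) :
    Integrable (fun x : E ↦ ‖x‖ ^ d * exp (-k * ‖x‖ ^ e)) μ := by
  cases subsingleton_or_nontrivial E
  · exact .of_finite
  have hn : ((finrank ℝ E - 1 : ℕ) : ℝ) = finrank ℝ E - 1 := by
    rw [Nat.cast_sub finrank_pos, Nat.cast_one]
  refine (integrable_fun_norm_addHaar μ (f := fun r ↦ r ^ d * exp (-k * r ^ e))).mpr ?_
  refine (integrableOn_rpow_mul_exp_neg_mul_rpow (s := (finrank ℝ E - 1 : ℕ) + d)
    (by linarith) he hk).congr_fun (fun r (hr : 0 < r) ↦ ?_) measurableSet_Ioi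
  simp only [smul_eq_mul, Real.rpow_add hr, Real.rpow_natCast, mul_assoc]

namespace IsPosHomogeneous

variable {d e : ℝ} {f q : E → ℝ}

lemma integrable_mul_exp_neg (hf : IsPosHomogeneous d f) (hd : 0 < d) (hfc : Continuous f)
    (hq : IsPosHomogeneous e q) (he : 0 < e) (hqc : Continuous q) (hpos : ∀ x ≠ 0, 0 < q x) :
    Integrable (fun x ↦ f x * exp (-q x)) μ := by
  obtain ⟨C, hC⟩ := hf.exists_abs_le_mul_norm_rpow hd.ne' hfc
  obtain ⟨k, hk, hkq⟩ := hq.exists_pos_mul_norm_rpow_le he.ne' hqc hpos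
  have hdom := integrable_norm_rpow_mul_exp_neg_mul_norm_rpow μ
    (d := d) (by linarith [(finrank ℝ E).cast_nonneg (α := ℝ)]) he hk
  refine (hdom.const_mul C).mono' (by fun_prop) (.of_forall fun x ↦ ?_)
  calc ‖f x * exp (-q x)‖ = |f x| * exp (-q x) := by
        rw [norm_mul, norm_eq_abs, norm_eq_abs, abs_exp]
    _ ≤ C * ‖x‖ ^ d * exp (-k * ‖x‖ ^ e) := by
        gcongr
        · exact (abs_nonneg _).trans (hC x)
        · exact hC x
        · linarith [hkq x]
    _ = C * (‖x‖ ^ d * exp (-k * ‖x‖ ^ e)) := mul_assoc ..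

lemma integrable_mul_comp_mul (hf : IsPosHomogeneous d f) (hq : IsPosHomogeneous e q) (he : e ≠ 0)
    {φ : ℝ → ℝ} (hint : Integrable (fun x ↦ f x * φ (q x)) μ) {t : ℝ} (ht : 0 < t) :
    Integrable (fun x ↦ f x * φ (t * q x)) μ := by
  simp only [hf.mul_comp_mul_eq hq he φ ht]
  exact (hint.comp_smul (rpow_pos_of_pos ht _).ne').const_mul _

lemma integral_mul_comp_mul (hf : IsPosHomogeneous d f) (hq : IsPosHomogeneous e q) (he : e ≠ 0)
    (φ : ℝ → ℝ) {t : ℝ} (ht : 0 < t) :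
    ∫ x, f x * φ (t * q x) ∂μ = t ^ (-((finrank ℝ E + d) / e)) * ∫ x, f x * φ (q x) ∂μ := by
  have hjac : |((t ^ e⁻¹) ^ finrank ℝ E)⁻¹| = t ^ (-(finrank ℝ E / e)) := by
    rw [abs_of_pos (by positivity), ← rpow_mul_natCast ht.le, ← rpow_neg ht.le, inv_mul_eq_div]
  simp only [hf.mul_comp_mul_eq hq he φ ht]
  rw [integral_const_mul, Measure.integral_comp_smul μ (fun x ↦ f x * φ (q x)), hjac, smul_eq_mul,
    ← mul_assoc, ← rpow_add ht]
  ring_nf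

theorem integral_mul_mul_exp_neg (hf : IsPosHomogeneous d f) (hq : IsPosHomogeneous e q)
    (he : e ≠ 0) (hqm : AEStronglyMeasurable q μ) (hq0 : ∀ x, 0 ≤ q x)
    (hint : Integrable (fun x ↦ f x * exp (-q x)) μ) :
    ∫ x, f x * q x * exp (-q x) ∂μ = (finrank ℝ E + d) / e * ∫ x, f x * exp (-q x) ∂μ := by
  have hderiv := hasDerivAt_integral_mul_exp_neg_mul hqm hq0
    (fun t ht ↦ hf.integrable_mul_comp_mul μ hq he (φ := fun r ↦ exp (-r)) hint ht) one_pos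
  have hscaling : HasDerivAt (fun t ↦ ∫ x, f x * exp (-(t * q x)) ∂μ)
      (-((finrank ℝ E + d) / e) * ∫ x, f x * exp (-q x) ∂μ) 1 := by
    have hpow := (hasDerivAt_rpow_const (p := -((finrank ℝ E + d) / e))
      (.inl one_ne_zero)).mul_const (∫ x, f x * exp (-q x) ∂μ)
    rw [one_rpow, mul_one] at hpow
    refine hpow.congr_of_eventuallyEq ?_
    filter_upwards [lt_mem_nhds one_pos] with t ht
      using hf.integral_mul_comp_mul μ hq he (fun r ↦ exp (-r)) ht
  have heq := hderiv.unique hscaling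
  simp only [one_mul, integral_neg, neg_mul, neg_inj, mul_right_comm (f _)] at heq
  exact heq

end IsPosHomogeneous

end Integral

lemma setIntegral_nonpos_mul_eq_integral_min_mul {α : Type*} [MeasurableSpace α] {μ : Measure α}
    {l : α → ℝ} (hl : Measurable l) (g : α → ℝ) :
    ∫ x in {x | l x ≤ 0}, l x * g x ∂μ = ∫ x, min (l x) 0 * g x ∂μ := by
  rw [← integral_indicator (measurableSet_le hl measurable_const)]
  congr with x
  by_cases hx : l x ≤ 0
  · simp [hx]
  · simp [hx, (not_le.mp hx).le]

lemma isPosHomogeneous_quadratic_div {ι : Type*} [Fintype ι] (B : Matrix ι ι ℝ) (c : ℝ) :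
    IsPosHomogeneous 2 fun z ↦ z ⬝ᵥ B *ᵥ z / c := fun s _ z ↦ by
  simp only [mulVec_smul, dotProduct_smul, smul_dotProduct, smul_eq_mul, rpow_two]
  ring

lemma isPosHomogeneous_min_dotProduct_zero {ι : Type*} [Fintype ι] (v : ι → ℝ) :
    IsPosHomogeneous 1 fun z ↦ min (v ⬝ᵥ z) 0 := fun s hs z ↦ by
  dsimp only
  rw [dotProduct_smul, smul_eq_mul, rpow_one, mul_min_of_nonneg _ _ hs.le, mul_zero]

theorem integral_mul_quadratic_mul_gaussDensity {m : ℕ} {A : Matrix (Fin m) (Fin m) ℝ}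
    (hA : A.PosDef) {d σ : ℝ} (hσ : σ ≠ 0) {f : (Fin m → ℝ) → ℝ} (hf : IsPosHomogeneous d f)
    (hd : 0 < d) (hfc : Continuous f) (x : Fin m → ℝ) :
    ∫ y, f (y - x) * ((y - x) ⬝ᵥ A⁻¹ *ᵥ (y - x)) * gaussDensity m A x y σ =
      (m + d) * σ ^ 2 * ∫ y, f (y - x) * gaussDensity m A x y σ := by
  set q : (Fin m → ℝ) → ℝ := fun z ↦ z ⬝ᵥ A⁻¹ *ᵥ z / (2 * σ ^ 2) with hq_def
  set K : ℝ := (2 * π * σ ^ 2) ^ (-(m : ℝ) / 2) * A.det ^ (-(1 : ℝ) / 2) with hK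
  have hq : IsPosHomogeneous 2 q := isPosHomogeneous_quadratic_div _ _
  have hqc : Continuous q := by fun_prop
  have hpos : ∀ z ≠ 0, 0 < q z := fun z hz ↦
    div_pos (by simpa using hA.inv.dotProduct_mulVec_pos hz) (by positivity)
  have hq0 (z : Fin m → ℝ) : 0 ≤ q z := by
    rcases eq_or_ne z 0 with rfl | hz
    exacts [(hq.map_zero two_ne_zero).ge, (hpos z hz).le]
  have hdensity (y : Fin m → ℝ) : gaussDensity m A x y σ = K * exp (-q (y - x)) := by
    simp only [gaussDensity, hK, hq_def, neg_div]
  have heuler := hf.integral_mul_mul_exp_neg volume hq two_ne_zero hqc.aestronglyMeasurable hq0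
    (hf.integrable_mul_exp_neg volume hd hfc hq two_pos hqc hpos)
  rw [finrank_fin_fun] at heuler
  calc ∫ y, f (y - x) * ((y - x) ⬝ᵥ A⁻¹ *ᵥ (y - x)) * gaussDensity m A x y σ
      = ∫ y, 2 * σ ^ 2 * K * (f (y - x) * q (y - x) * exp (-q (y - x))) := by
        congr with y
        rw [hdensity]
        simp only [hq_def]
        field_simp
    _ = 2 * σ ^ 2 * K * ∫ z, f z * q z * exp (-q z) := by
        rw [integral_const_mul, integral_sub_right_eq_self (fun z ↦ f z * q z * exp (-q z))]
    _ = (m + d) * σ ^ 2 * (K * ∫ z, f z * exp (-q z)) := by rw [heuler]; ring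
    _ = (m + d) * σ ^ 2 * ∫ y, f (y - x) * gaussDensity m A x y σ := by
        simp only [hdensity, mul_left_comm _ K]
        rw [integral_const_mul, integral_sub_right_eq_self (fun z ↦ f z * exp (-q z))]
        ring

/-- For fixed `x, λ ∈ ℝᵐ`, the half-space `R = {y : λᵀ(y-x) ≤ 0}` and `σ > 0`,
`∫_R λᵀ(y-x) σ⁻³ (y-x)ᵀA⁻¹(y-x) g(y|x,σ) dy = (m+1) σ⁻¹ ∫_R λᵀ(y-x) g(y|x,σ) dy`. -/
theorem halfspace_quadratic (m : ℕ) (A : Matrix (Fin m) (Fin m) ℝ) (hA : A.PosDef)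
    (x lam : Fin m → ℝ) (σ : ℝ) (hσ : 0 < σ) :
    ∫ y in {y : Fin m → ℝ | lam ⬝ᵥ (y - x) ≤ 0},
        (lam ⬝ᵥ (y - x)) * (σ ^ (-3 : ℤ) * ((y - x) ⬝ᵥ (A⁻¹).mulVec (y - x))) *
          gaussDensity m A x y σ
      = ((m : ℝ) + 1) * σ⁻¹ *
          ∫ y in {y : Fin m → ℝ | lam ⬝ᵥ (y - x) ≤ 0},
            (lam ⬝ᵥ (y - x)) * gaussDensity m A x y σ := by
  have hl : Measurable fun y ↦ lam ⬝ᵥ (y - x) := by fun_prop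
  have hσ3 : σ ^ (-3 : ℤ) * σ ^ 2 = σ⁻¹ := by
    rw [← zpow_natCast, ← zpow_add₀ hσ.ne']
    simp
  simp only [mul_assoc (lam ⬝ᵥ _), setIntegral_nonpos_mul_eq_integral_min_mul hl]
  calc ∫ y, min (lam ⬝ᵥ (y - x)) 0 *
          (σ ^ (-3 : ℤ) * ((y - x) ⬝ᵥ A⁻¹ *ᵥ (y - x)) * gaussDensity m A x y σ)
      = σ ^ (-3 : ℤ) * ∫ y, min (lam ⬝ᵥ (y - x)) 0 *
          ((y - x) ⬝ᵥ A⁻¹ *ᵥ (y - x)) * gaussDensity m A x y σ := by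
        rw [← integral_const_mul]
        congr with y
        ring
    _ = σ ^ (-3 : ℤ) *
          ((m + 1) * σ ^ 2 * ∫ y, min (lam ⬝ᵥ (y - x)) 0 * gaussDensity m A x y σ) := by
        rw [integral_mul_quadratic_mul_gaussDensity hA hσ.ne'
          (isPosHomogeneous_min_dotProduct_zero lam) one_pos (by fun_prop)]
    _ = (m + 1) * σ⁻¹ * ∫ y, min (lam ⬝ᵥ (y - x)) 0 * gaussDensity m A x y σ := by
        rw [← hσ3]
        ring
end
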